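/- arXiv:math/9803047 — 2 statements merged into one kernel-verified Lean document; each statement's English description precedes it below -/
import Mathlib

section
/- Let r ≥ 1 and let M be an r×r real symmetric matrix that is negative definite and satisfies M i j ≥ 0 for all i ≠ j (so M i i < 0 for all i). Let c ∈ ℝ^r satisfy c i ≥ 0 for all i, and let m = M⁻¹ c. Then -mᵀ M m ≥ Σ_{i=1}^{r} (c i)² / (-M i i). -/
open Matrix

/-!
Let `M` be negative definite with nonnegative off-diagonal entries, and `M m = c ≥ 0`. If `m⁺ ≠ 0`,
then `m⁺ᵀ M m = m⁺ᵀ M m⁺ - m⁺ᵀ M m⁻` is negative, because `m⁺` and `m⁻` have disjoint supports and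
so only off-diagonal entries contribute to the last term; but `m⁺ᵀ c ≥ 0`. Hence `m ≤ 0`, and
dropping the off-diagonal terms of `(M m) i` gives `c i ≤ M i i * m i`, that is,
`c i / (-M i i) ≤ -m i`. Multiplying by `c i` and summing over `i` bounds `-cᵀ m = -mᵀ M m`.
-/

lemma diag_neg_of_dotProduct_mulVec_neg {ι R : Type*} [Fintype ι] [NonAssocSemiring R]
    [Nontrivial R] [LT R] {M : Matrix ι ι R} (hneg : ∀ x : ι → R, x ≠ 0 → x ⬝ᵥ (M *ᵥ x) < 0)
    (i : ι) : M i i < 0 := by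
  classical
  simpa using hneg (Pi.single i 1) (by simp)

lemma det_ne_zero_of_dotProduct_mulVec_neg {ι R : Type*} [Fintype ι] [DecidableEq ι] [CommRing R]
    [IsDomain R] [Preorder R] {M : Matrix ι ι R}
    (hneg : ∀ x : ι → R, x ≠ 0 → x ⬝ᵥ (M *ᵥ x) < 0) : M.det ≠ 0 := by
  intro hdet
  obtain ⟨v, hv, hMv⟩ := exists_mulVec_eq_zero_iff.mpr hdet
  simpa [hMv] using hneg v hv

section OrderedSemiring

variable {ι R : Type*} [Fintype ι] [Semiring R] [PartialOrder R] [IsOrderedRing R]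
  {M : Matrix ι ι R}

lemma dotProduct_mulVec_nonneg_of_forall_eq_zero_or (hoff : ∀ i j, i ≠ j → 0 ≤ M i j)
    {x y : ι → R} (hx : 0 ≤ x) (hy : 0 ≤ y) (hxy : ∀ i, x i = 0 ∨ y i = 0) :
    0 ≤ x ⬝ᵥ (M *ᵥ y) := by
  simp only [dotProduct, mulVec, Finset.mul_sum]
  refine Finset.sum_nonneg fun i _ => Finset.sum_nonneg fun j _ => ?_
  rcases eq_or_ne i j with rfl | hij
  · rcases hxy i with h | h <;> simp [h]
  · exact mul_nonneg (hx i) (mul_nonneg (hoff i j hij) (hy j))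

lemma mulVec_apply_le_diag_mul (hoff : ∀ i j, i ≠ j → 0 ≤ M i j) {m : ι → R} (hm : m ≤ 0)
    (i : ι) : (M *ᵥ m) i ≤ M i i * m i := by
  classical
  rw [mulVec, dotProduct, ← Finset.add_sum_erase _ _ (Finset.mem_univ i)]
  exact add_le_of_nonpos_right <| Finset.sum_nonpos fun j hj =>
    mul_nonpos_of_nonneg_of_nonpos (hoff i j (Finset.ne_of_mem_erase hj).symm) (hm j)

end OrderedSemiring

lemma nonpos_of_mulVec_nonneg {ι R : Type*} [Fintype ι] [Ring R] [LinearOrder R] [IsOrderedRing R]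
    {M : Matrix ι ι R} (hneg : ∀ x : ι → R, x ≠ 0 → x ⬝ᵥ (M *ᵥ x) < 0)
    (hoff : ∀ i j, i ≠ j → 0 ≤ M i j) {m : ι → R} (hm : 0 ≤ M *ᵥ m) : m ≤ 0 := by
  have hdisj (i : ι) : m⁺ i = 0 ∨ m⁻ i = 0 :=
    (le_total (m i) 0).imp posPart_eq_zero.mpr negPart_eq_zero.mpr
  have hcross : 0 ≤ m⁺ ⬝ᵥ (M *ᵥ m⁻) :=
    dotProduct_mulVec_nonneg_of_forall_eq_zero_or hoff (posPart_nonneg m) (negPart_nonneg m) hdisj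
  have hpos : 0 ≤ m⁺ ⬝ᵥ (M *ᵥ m⁺) :=
    calc
      0 ≤ m⁺ ⬝ᵥ (M *ᵥ m) + m⁺ ⬝ᵥ (M *ᵥ m⁻) :=
        add_nonneg (dotProduct_nonneg_of_nonneg (posPart_nonneg m) hm) hcross
      _ = m⁺ ⬝ᵥ (M *ᵥ (m + m⁻)) := by rw [mulVec_add, dotProduct_add]
      _ = m⁺ ⬝ᵥ (M *ᵥ m⁺) := by rw [← sub_eq_iff_eq_add.mp (posPart_sub_negPart m)]
  exact posPart_eq_zero.mp (not_imp_comm.mp (hneg m⁺) hpos.not_gt)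

section OrderedField

variable {ι K : Type*} [Fintype ι] [Field K] [LinearOrder K] [IsStrictOrderedRing K]
  {M : Matrix ι ι K}

lemma sum_sq_mulVec_div_neg_diag_le (hdiag : ∀ i, M i i < 0) (hoff : ∀ i j, i ≠ j → 0 ≤ M i j)
    {m : ι → K} (hm : m ≤ 0) (hMm : 0 ≤ M *ᵥ m) :
    ∑ i, (M *ᵥ m) i ^ 2 / (-M i i) ≤ -(m ⬝ᵥ (M *ᵥ m)) := by
  rw [← neg_dotProduct]
  refine Finset.sum_le_sum fun i _ => ?_
  have hquot : (M *ᵥ m) i / (-M i i) ≤ -m i := by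
    rw [div_le_iff₀ (neg_pos.mpr (hdiag i)), neg_mul_neg, mul_comm]
    exact mulVec_apply_le_diag_mul hoff hm i
  calc
    (M *ᵥ m) i ^ 2 / (-M i i) = (M *ᵥ m) i / (-M i i) * (M *ᵥ m) i := by ring
    _ ≤ -m i * (M *ᵥ m) i := mul_le_mul_of_nonneg_right hquot (hMm i)

theorem neg_quadratic_ge_sum_general [DecidableEq ι]
    (hneg : ∀ x : ι → K, x ≠ 0 → x ⬝ᵥ (M *ᵥ x) < 0) (hoff : ∀ i j, i ≠ j → 0 ≤ M i j)
    {c m : ι → K} (hc : 0 ≤ c) (hm : m = M⁻¹ *ᵥ c) :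
    ∑ i, c i ^ 2 / (-M i i) ≤ -(m ⬝ᵥ (M *ᵥ m)) := by
  obtain rfl : M *ᵥ m = c := by
    rw [hm, mulVec_mulVec, mul_nonsing_inv _ (det_ne_zero_of_dotProduct_mulVec_neg hneg).isUnit,
      one_mulVec]
  exact sum_sq_mulVec_div_neg_diag_le (diag_neg_of_dotProduct_mulVec_neg hneg) hoff
    (nonpos_of_mulVec_nonneg hneg hoff hc) hc

end OrderedField

/-- **Lemma 1.3 (matrix form).** If `M` is a symmetric negative definite real matrix with
nonnegative off-diagonal entries, `c` has nonnegative entries and `m = M⁻¹ c`, then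
`-mᵀ M m ≥ Σᵢ (c i)² / (-M i i)`. -/
theorem neg_quadratic_ge_sum (r : ℕ) (hr : 1 ≤ r)
    (M : Matrix (Fin r) (Fin r) ℝ) (hsymm : M.IsSymm)
    (hnegdef : ∀ x : Fin r → ℝ, x ≠ 0 → x ⬝ᵥ (M *ᵥ x) < 0)
    (hoffdiag : ∀ i j : Fin r, i ≠ j → 0 ≤ M i j)
    (c : Fin r → ℝ) (hc : ∀ i, 0 ≤ c i)
    (m : Fin r → ℝ) (hm : m = M⁻¹ *ᵥ c) :
    ∑ i : Fin r, (c i) ^ 2 / (- M i i) ≤ - (m ⬝ᵥ (M *ᵥ m)) :=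
  neg_quadratic_ge_sum_general hnegdef hoffdiag hc hm
end

section
/- No real number α is an accumulation point of S from above; that is, for every α ∈ ℝ there exists ε > 0 such that no s ∈ S satisfies α < s < α + ε. Equivalently, there is no strictly decreasing sequence of elements of S. -/
open Matrix

structure ResolutionDatum (r : ℕ) where
  M : Matrix (Fin r) (Fin r) ℤ
  p : Fin r → ℕ
  symm : M.IsSymm
  negdef : ∀ x : Fin r → ℝ, x ≠ 0 → x ⬝ᵥ ((M.map (Int.cast : ℤ → ℝ)) *ᵥ x) < 0
  offdiag_nonneg : ∀ i j : Fin r, i ≠ j → 0 ≤ M i j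
  diag_le_neg_two : ∀ i : Fin r, p i = 0 → M i i ≤ -2
  connected : (SimpleGraph.fromRel (fun i j : Fin r => 0 < M i j)).Connected

/-- The vector `c i = 2 p i - 2 - M i i` (the values `K · A_i`). -/
def ResolutionDatum.c {r : ℕ} (D : ResolutionDatum r) : Fin r → ℚ :=
  fun i => 2 * (D.p i : ℚ) - 2 - (D.M i i : ℚ)

/-- `-K² = -cᵀ M⁻¹ c`. -/
noncomputable def ResolutionDatum.negK2 {r : ℕ} (D : ResolutionDatum r) : ℚ :=
  - (D.c ⬝ᵥ ((D.M.map (Int.cast : ℤ → ℚ))⁻¹ *ᵥ D.c))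

/-- The set of all values `-K²` of normal surface singularities. -/
def negK2Set : Set ℝ :=
  { x : ℝ | ∃ (r : ℕ) (_ : 0 < r) (D : ResolutionDatum r), x = (D.negK2 : ℝ) }

/-!
Put `e i = K · A_i`. Then `-K²` is the maximum of the concave function
`2 ∑ e i x i + xᵀ M x`, and `-xᵀ M x` is a diagonal form plus the Dirichlet energy of the dual
graph, viewed as an electrical network with edges of length one. At a vertex of valency two with
`e i = 0` there is no diagonal term, so the series law replaces the vertex and its two edges by a
single edge whose length is the sum of theirs. A test vector shows that `-K²` bounds `∑ e i`, and
then positivity of `-M` and connectedness bound the number of the remaining vertices and edges and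
the remaining coefficients. Hence, below any given bound, the values `-K²` are attained on finitely
many networks with varying integer edge lengths. As the maximum is monotone in the lengths,
Dickson's lemma excludes descending sequences.
-/

theorem isWF_of_forall_inter_Iic_isWF {α : Type*} [Preorder α] {s : Set α}
    (h : ∀ a ∈ s, (s ∩ Set.Iic a).IsWF) : s.IsWF := by
  rw [Set.isWF_iff_no_descending_seq]
  intro f hf hmem
  exact Set.isWF_iff_no_descending_seq.1 (h (f 0) (hmem 0)) f hf fun n =>
    ⟨hmem n, hf.antitone (Nat.zero_le n)⟩

theorem exists_gt_forall_notMem_Ioo {α : Type*} [LinearOrder α] [NoMaxOrder α] {s : Set α}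
    (hs : s.IsWF) (a : α) : ∃ b > a, ∀ x ∈ s, x ∉ Set.Ioo a b := by
  rcases (s ∩ Set.Ioi a).eq_empty_or_nonempty with hempty | hne
  · obtain ⟨b, hb⟩ := exists_gt a
    exact ⟨b, hb, fun x hx hxb => hempty.le ⟨hx, hxb.1⟩⟩
  · have hwf := hs.mono (Set.inter_subset_left (t := Set.Ioi a))
    exact ⟨hwf.min hne, (hwf.min_mem hne).2, fun x hx hxb =>
      hwf.not_lt_min hne ⟨hx, hxb.1⟩ hxb.2⟩

theorem isGreatest_range_of_forall_exists_le {α β γ : Type*} [PartialOrder γ] {f : α → γ}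
    {g : β → γ} {s : γ} (hs : IsGreatest (Set.range f) s) (hfg : ∀ x, ∃ y, f x ≤ g y)
    (hgf : ∀ y, ∃ x, g y ≤ f x) : IsGreatest (Set.range g) s := by
  have hub : ∀ y, g y ≤ s := fun y =>
    (hgf y).elim fun x hx => hx.trans (hs.2 (Set.mem_range_self x))
  obtain ⟨x, rfl⟩ := hs.1
  obtain ⟨y, hy⟩ := hfg x
  exact ⟨⟨y, (hub y).antisymm hy⟩, Set.forall_mem_range.2 hub⟩

theorem isGreatest_range_two_mul_dotProduct_sub {n : Type*} [Fintype n] [DecidableEq n]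
    {A : Matrix n n ℝ} (hA : A.PosDef) (c : n → ℝ) :
    IsGreatest (Set.range fun x => 2 * (c ⬝ᵥ x) - x ⬝ᵥ A *ᵥ x) (c ⬝ᵥ A⁻¹ *ᵥ c) := by
  set z := A⁻¹ *ᵥ c
  have hAz : A *ᵥ z = c := by
    rw [mulVec_mulVec, mul_nonsing_inv _ ((isUnit_iff_isUnit_det A).1 hA.isUnit), one_mulVec]
  have hzA (x : n → ℝ) : z ⬝ᵥ A *ᵥ x = c ⬝ᵥ x := by
    have hsymm : Aᵀ = A := isHermitian_iff_isSymm.1 hA.isHermitian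
    rw [dotProduct_mulVec, ← mulVec_transpose, hsymm, hAz]
  have hsquare (x : n → ℝ) :
      2 * (c ⬝ᵥ x) - x ⬝ᵥ A *ᵥ x = c ⬝ᵥ z - (x - z) ⬝ᵥ A *ᵥ (x - z) := by
    simp only [mulVec_sub, sub_dotProduct, dotProduct_sub, hAz, hzA, dotProduct_comm _ c]
    ring
  refine ⟨⟨z, by simp [hsquare]⟩, Set.forall_mem_range.2 fun x => ?_⟩
  have hnonneg : 0 ≤ (x - z) ⬝ᵥ A *ᵥ (x - z) := hA.posSemidef.dotProduct_mulVec_nonneg (x - z)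
  simpa [hsquare] using hnonneg

theorem map_nonsing_inv {n K L : Type*} [Fintype n] [DecidableEq n] [Field K] [Field L]
    (f : K →+* L) (A : Matrix n n K) : A⁻¹.map f = (A.map f)⁻¹ := by
  have hadj := f.map_adjugate A
  have hdet := f.map_det A
  simp only [RingHom.mapMatrix_apply] at hadj hdet
  ext i j
  simp [inv_def, ← hadj, ← hdet]

/-- A multigraph on `V` whose edges carry positive integer lengths; loops are allowed. -/
abbrev LengthGraph (V : Type*) : Type _ := Multiset (Sym2 V × ℕ+)

namespace LengthGraph

variable {V ι : Type*}

/-- The squared increment of `x` along an unordered pair of vertices. -/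
def sqDiff (x : V → ℝ) : Sym2 V → ℝ :=
  Sym2.lift ⟨fun u v => (x u - x v) ^ 2, fun u v => sub_sq_comm (x u) (x v)⟩

@[simp]
theorem sqDiff_mk (x : V → ℝ) (u v : V) : sqDiff x s(u, v) = (x u - x v) ^ 2 := rfl

theorem sqDiff_nonneg (x : V → ℝ) (e : Sym2 V) : 0 ≤ sqDiff x e := by
  induction e with | _ u v => exact sq_nonneg (x u - x v)

theorem sqDiff_congr {x y : V → ℝ} {e : Sym2 V} (h : ∀ v ∈ e, x v = y v) :
    sqDiff x e = sqDiff y e := by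
  induction e with | _ u v => simp [h u (by simp), h v (by simp)]

theorem sqDiff_map {K : Type*} (φ : K → V) (x : V → ℝ) (e : Sym2 K) :
    sqDiff x (e.map φ) = sqDiff (x ∘ φ) e := by
  induction e with | _ u v => rfl

/-- The Dirichlet energy of the potential `x`: an edge of length `ℓ` has conductance `1 / ℓ`. -/
noncomputable def energy (E : LengthGraph V) (x : V → ℝ) : ℝ :=
  (E.map fun e => sqDiff x e.1 / e.2).sum

@[simp]
theorem energy_cons (e : Sym2 V × ℕ+) (E : LengthGraph V) (x : V → ℝ) :
    energy (e ::ₘ E) x = sqDiff x e.1 / e.2 + energy E x := by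
  simp [energy]

theorem energy_congr {E : LengthGraph V} {x y : V → ℝ} (h : ∀ e ∈ E, ∀ v ∈ e.1, x v = y v) :
    energy E x = energy E y :=
  congrArg Multiset.sum <| Multiset.map_congr rfl fun e he => by rw [sqDiff_congr (h e he)]

section Degree

variable [DecidableEq V]

/-- The number of edge ends at `v`; a loop has both of its ends there. -/
def degree (E : LengthGraph V) (v : V) : ℕ :=
  (E.map fun e => e.1.toMultiset.count v).sum

theorem count_toMultiset_mk (u w v : V) :
    s(u, w).toMultiset.count v = (if v = u then 1 else 0) + if v = w then 1 else 0 := by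
  change Multiset.count v {u, w} = _
  rw [Multiset.insert_eq_cons, Multiset.count_cons, Multiset.count_singleton, add_comm]

@[simp]
theorem degree_cons (u w : V) (l : ℕ+) (E : LengthGraph V) (v : V) :
    degree ((s(u, w), l) ::ₘ E) v =
      (if v = u then 1 else 0) + (if v = w then 1 else 0) + degree E v := by
  simp [degree, count_toMultiset_mk]

theorem degree_eq_zero_iff {E : LengthGraph V} {v : V} :
    degree E v = 0 ↔ ∀ e ∈ E, v ∉ e.1 := by
  simp only [degree, Multiset.sum_eq_zero_iff, Multiset.forall_mem_map_iff,
    Multiset.count_eq_zero, Sym2.mem_toMultiset]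

theorem sum_degree [Fintype V] (E : LengthGraph V) : ∑ v, degree E v = 2 * E.card := by
  induction E using Multiset.induction_on with
  | empty => simp [degree]
  | cons e E ih =>
    obtain ⟨⟨u, w⟩, l⟩ := e
    simp [Finset.sum_add_distrib, ih]
    ring

theorem energy_update_of_degree_eq_zero {E : LengthGraph V} {v : V} (h : degree E v = 0)
    (x : V → ℝ) (a : ℝ) : energy E (Function.update x v a) = energy E x :=
  energy_congr fun e he w hw => Function.update_of_ne
    (by rintro rfl; exact degree_eq_zero_iff.1 h e he hw) _ _

theorem energy_ite_le_sq_mul_sum_degree (E : LengthGraph V) (T : Finset V) (a b : ℝ) :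
    energy E (fun v => if v ∈ T then a else b) ≤ (a - b) ^ 2 * ∑ v ∈ T, (degree E v : ℝ) := by
  induction E using Multiset.induction_on with
  | empty => simp [energy, degree]
  | cons e E ih =>
    obtain ⟨⟨u, w⟩, l⟩ := e
    set x : V → ℝ := fun v => if v ∈ T then a else b
    have hdiv : (x u - x w) ^ 2 / (l : ℕ) ≤ (x u - x w) ^ 2 :=
      div_le_self (sq_nonneg _) (by exact_mod_cast l.pos)
    have hends : (x u - x w) ^ 2 ≤
        (a - b) ^ 2 * ((if u ∈ T then 1 else 0) + if w ∈ T then 1 else 0) := by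
      simp only [x]
      split_ifs <;> nlinarith [sq_nonneg (a - b)]
    calc energy ((s(u, w), l) ::ₘ E) x
        ≤ (a - b) ^ 2 * ((if u ∈ T then 1 else 0) + if w ∈ T then 1 else 0) +
          (a - b) ^ 2 * ∑ v ∈ T, (degree E v : ℝ) := by
          rw [energy_cons, sqDiff_mk]
          exact add_le_add (hdiv.trans hends) ih
      _ = (a - b) ^ 2 * ∑ v ∈ T, (degree ((s(u, w), l) ::ₘ E) v : ℝ) := by
          simp [Finset.sum_add_distrib, mul_add]

theorem exists_eq_cons_of_degree_ne_zero {E : LengthGraph V} {v : V} (h : degree E v ≠ 0) :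
    ∃ u l E', E = (s(v, u), l) ::ₘ E' := by
  simp only [ne_eq, degree_eq_zero_iff, not_forall, not_not] at h
  obtain ⟨⟨e, l⟩, he, hv⟩ := h
  obtain ⟨u, rfl⟩ := hv
  obtain ⟨E', rfl⟩ := Multiset.exists_cons_of_mem he
  exact ⟨u, l, E', rfl⟩

theorem eq_cons_loop_or_eq_cons_cons_of_degree_eq_two {E : LengthGraph V} {v : V}
    (h : degree E v = 2) :
    (∃ l E₀, degree E₀ v = 0 ∧ E = (s(v, v), l) ::ₘ E₀) ∨
      ∃ u w l m E₀, u ≠ v ∧ w ≠ v ∧ degree E₀ v = 0 ∧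
        E = (s(v, u), l) ::ₘ (s(v, w), m) ::ₘ E₀ := by
  obtain ⟨u, l, E₁, rfl⟩ := exists_eq_cons_of_degree_ne_zero (h.trans_ne two_ne_zero)
  rw [degree_cons, if_pos rfl] at h
  by_cases hu : v = u
  · subst hu
    exact .inl ⟨l, E₁, by simpa using h, rfl⟩
  rw [if_neg hu] at h
  obtain ⟨w, m, E₀, rfl⟩ := exists_eq_cons_of_degree_ne_zero (E := E₁) (v := v) (by omega)
  rw [degree_cons, if_pos rfl] at h
  have hw : v ≠ w := fun hw => by rw [if_pos hw] at h; omega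
  exact .inr ⟨u, w, l, m, E₀, Ne.symm hu, hw.symm, by rw [if_neg hw] at h; omega, rfl⟩

end Degree

section Objective

variable [Fintype V] {c d : V → ℝ} {s : ℝ}

/-- The quadratic function of a potential of which the values `-K²` are maxima. -/
noncomputable def objective (c d : V → ℝ) (E : LengthGraph V) (x : V → ℝ) : ℝ :=
  ∑ v, (2 * c v * x v - d v * x v ^ 2) - energy E x

/-- The maximum of `objective c d E` exists and equals `s`. -/
def HasMaxValue (c d : V → ℝ) (E : LengthGraph V) (s : ℝ) : Prop :=
  IsGreatest (Set.range (objective c d E)) s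

theorem objective_cons (e : Sym2 V × ℕ+) (E : LengthGraph V) (x : V → ℝ) :
    objective c d (e ::ₘ E) x = objective c d E x - sqDiff x e.1 / e.2 := by
  rw [objective, objective, energy_cons]
  ring

theorem HasMaxValue.of_cons_loop {v : V} {l : ℕ+} {E : LengthGraph V}
    (h : HasMaxValue c d ((s(v, v), l) ::ₘ E) s) : HasMaxValue c d E s := by
  have hobj : objective c d ((s(v, v), l) ::ₘ E) = objective c d E :=
    funext fun x => by simp [objective_cons]
  rwa [HasMaxValue, hobj] at h

variable [DecidableEq V]

theorem objective_update {E : LengthGraph V} {v : V} (hc : c v = 0) (hd : d v = 0)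
    (hE : degree E v = 0) (x : V → ℝ) (a : ℝ) :
    objective c d E (Function.update x v a) = objective c d E x := by
  rw [objective, objective, energy_update_of_degree_eq_zero hE]
  congr 1
  refine Finset.sum_congr rfl fun w _ => ?_
  by_cases hw : w = v
  · simp [hw, hc, hd]
  · rw [Function.update_of_ne hw]

/-- The series law for conductances: maximizing over the potential at `v` replaces two edges
meeting there by a single edge whose length is the sum of theirs. -/
theorem HasMaxValue.series {u v w : V} {l m : ℕ+} {E : LengthGraph V}
    (h : HasMaxValue c d ((s(v, u), l) ::ₘ (s(v, w), m) ::ₘ E) s)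
    (hc : c v = 0) (hd : d v = 0) (hu : u ≠ v) (hw : w ≠ v) (hE : degree E v = 0) :
    HasMaxValue c d ((s(u, w), l + m) ::ₘ E) s := by
  refine isGreatest_range_of_forall_exists_le h (fun x => ⟨x, ?_⟩) fun x =>
    ⟨Function.update x v ((m * x u + l * x w) / (l + m)), le_of_eq ?_⟩
  · have hseries : (x u - x w) ^ 2 / ((l : ℕ) + (m : ℕ)) ≤
        (x v - x u) ^ 2 / (l : ℕ) + (x v - x w) ^ 2 / (m : ℕ) := by
      simpa [Fin.sum_univ_two, sub_sq_comm (x u) (x v)] using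
        Finset.sq_sum_div_le_sum_sq_div Finset.univ ![x u - x v, x v - x w]
          (g := ![((l : ℕ) : ℝ), (m : ℕ)]) (by simp [Fin.forall_fin_two])
    simp only [objective_cons, sqDiff_mk, PNat.add_coe, Nat.cast_add]
    linarith
  · simp only [objective_cons, sqDiff_mk, PNat.add_coe, Nat.cast_add,
      objective_update hc hd hE, Function.update_self, Function.update_of_ne hu,
      Function.update_of_ne hw]
    field_simp
    ring

theorem HasMaxValue.exists_suppress {v : V} {E : LengthGraph V} (h : HasMaxValue c d E s)
    (hv : degree E v = 2) (hc : c v = 0) (hd : d v = 0) :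
    ∃ E' : LengthGraph V, E'.card < E.card ∧ degree E' = Function.update (degree E) v 0 ∧
      HasMaxValue c d E' s := by
  rcases eq_cons_loop_or_eq_cons_cons_of_degree_eq_two hv with
    ⟨l, E₀, hE₀, rfl⟩ | ⟨u, w, l, m, E₀, hu, hw, hE₀, rfl⟩
  · refine ⟨E₀, by simp, ?_, h.of_cons_loop⟩
    refine Function.eq_update_iff.2 ⟨hE₀, fun z hz => ?_⟩
    simp [hz]
  · refine ⟨(s(u, w), l + m) ::ₘ E₀, by simp, ?_, h.series hc hd hu hw hE₀⟩
    refine Function.eq_update_iff.2 ⟨by simp [hu.symm, hw.symm, hE₀], fun z hz => ?_⟩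
    simp [hz, add_assoc]

theorem HasMaxValue.exists_suppress_all {E : LengthGraph V} (h : HasMaxValue c d E s)
    (hd : ∀ v, c v = 0 → degree E v = 2 → d v = 0) :
    ∃ E' : LengthGraph V, HasMaxValue c d E' s ∧
      ∀ v, degree E' v = if c v = 0 ∧ degree E v = 2 then 0 else degree E v := by
  induction hn : E.card using Nat.strong_induction_on generalizing E with
  | _ n ih =>
    by_cases hE : ∃ v, c v = 0 ∧ degree E v = 2
    · obtain ⟨v, hcv, hv⟩ := hE
      obtain ⟨E₁, hcard, hdeg, h₁⟩ := h.exists_suppress hv hcv (hd v hcv hv)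
      have hdeg_ne (w : V) (hw : w ≠ v) : degree E₁ w = degree E w := by
        rw [hdeg, Function.update_of_ne hw]
      have hdeg_v : degree E₁ v = 0 := by rw [hdeg, Function.update_self]
      obtain ⟨E', h', hE'⟩ := ih _ (hn ▸ hcard) h₁ (fun w hcw hw => by
        by_cases hwv : w = v
        · simp [hwv, hdeg_v] at hw
        · exact hd w hcw (hdeg_ne w hwv ▸ hw)) rfl
      refine ⟨E', h', fun w => (hE' w).trans ?_⟩
      by_cases hwv : w = v
      · simp [hwv, hdeg_v, hcv, hv]
      · rw [hdeg_ne w hwv]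
    · exact ⟨E, h, fun v => (if_neg (not_exists.1 hE v)).symm⟩

end Objective

section MaxValues

variable [Fintype ι]

/-- The multigraph with edges indexed by `ι`, having ends `e` and lengths `l`. -/
def ofEnds (e : ι → Sym2 V) (l : ι → ℕ+) : LengthGraph V :=
  Finset.univ.val.map fun i => (e i, l i)

theorem energy_ofEnds (e : ι → Sym2 V) (l : ι → ℕ+) (x : V → ℝ) :
    energy (ofEnds e l) x = ∑ i, sqDiff x (e i) / l i := by
  rw [energy, ofEnds, Multiset.map_map]
  rfl

theorem exists_eq_ofEnds (E : LengthGraph V) :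
    ∃ (e : Fin E.card → Sym2 V) (l : Fin E.card → ℕ+), E = ofEnds e l := by
  induction E using Quotient.inductionOn with | _ L =>
  exact ⟨fun i => (L.get i).1, fun i => (L.get i).2,
    by rw [ofEnds, Fin.univ_val_map]; exact congrArg _ (List.ofFn_get L).symm⟩

theorem energy_ofEnds_antitone (e : ι → Sym2 V) (x : V → ℝ) :
    Antitone fun l => energy (ofEnds e l) x := fun l m hlm => by
  simp only [energy_ofEnds]
  refine Finset.sum_le_sum fun i _ => div_le_div_of_nonneg_left (sqDiff_nonneg x _) ?_ ?_
  · exact_mod_cast (l i).pos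
  · exact_mod_cast hlm i

/-- The maximal values of `objective` when the edge lengths vary and all else is fixed. -/
def maxValues [Fintype V] (c d : V → ℝ) (e : ι → Sym2 V) : Set ℝ :=
  {s | ∃ l : ι → ℕ+, HasMaxValue c d (ofEnds e l) s}

theorem isPWO_maxValues [Fintype V] (c d : V → ℝ) (e : ι → Sym2 V) :
    (maxValues c d e).IsPWO := by
  rw [Set.IsPWO, Set.partiallyWellOrderedOn_iff_exists_lt]
  intro s hs
  choose l hl using hs
  obtain ⟨i, j, hij, hle⟩ := wellQuasiOrdered_le l
  obtain ⟨x, hx⟩ := (hl i).1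
  exact ⟨i, j, hij, hx ▸ (sub_le_sub_left (energy_ofEnds_antitone e x hle) _).trans
    ((hl j).2 ⟨x, rfl⟩)⟩

theorem exists_sym2Map_eq {K : Type*} {φ : K → V} {z : Sym2 V} (hz : ∀ v ∈ z, v ∈ Set.range φ) :
    ∃ z', Sym2.map φ z' = z := by
  induction z with | _ u w =>
  obtain ⟨a, rfl⟩ := hz u (Sym2.mem_mk_left u w)
  obtain ⟨b, rfl⟩ := hz w (Sym2.mem_mk_right _ w)
  exact ⟨s(a, b), rfl⟩

theorem exists_eq_ofEnds_map {K : Type*} [DecidableEq V] (φ : K → V) {E : LengthGraph V}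
    (hE : ∀ v ∉ Set.range φ, degree E v = 0) :
    ∃ (e : Fin E.card → Sym2 K) (l : Fin E.card → ℕ+), E = ofEnds (Sym2.map φ ∘ e) l := by
  obtain ⟨e, l, hel⟩ := exists_eq_ofEnds E
  have hmem (i : Fin E.card) : ∀ v ∈ e i, v ∈ Set.range φ := fun v hv => by
    by_contra hvφ
    refine degree_eq_zero_iff.1 (hE v hvφ) (e i, l i) ?_ hv
    rw [hel]
    exact Multiset.mem_map_of_mem _ (Finset.mem_univ_val i)
  choose e' he' using fun i => exists_sym2Map_eq (hmem i)
  exact ⟨e', l, hel.trans (congrArg (ofEnds · l) (funext he').symm)⟩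

theorem objective_ofEnds_map {K : Type*} [Fintype V] [Fintype K] {c d : V → ℝ} {φ : K → V}
    (hφ : φ.Injective) (hc : ∀ v ∉ Set.range φ, c v = 0) (hd : ∀ v ∉ Set.range φ, d v = 0)
    (e : ι → Sym2 K) (l : ι → ℕ+) (x : V → ℝ) :
    objective c d (ofEnds (Sym2.map φ ∘ e) l) x =
      objective (c ∘ φ) (d ∘ φ) (ofEnds e l) (x ∘ φ) := by
  rw [objective, objective, ← Fintype.sum_of_injective φ hφ _ _
    (fun v hv => by simp [hc v hv, hd v hv]) fun _ => rfl]
  simp [energy_ofEnds, sqDiff_map]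

theorem HasMaxValue.exists_mem_maxValues {K : Type*} [Fintype V] [DecidableEq V] [Fintype K]
    {c d : V → ℝ} {s : ℝ} {E : LengthGraph V} (h : HasMaxValue c d E s) {φ : K → V}
    (hφ : φ.Injective) (hc : ∀ v ∉ Set.range φ, c v = 0) (hd : ∀ v ∉ Set.range φ, d v = 0)
    (hE : ∀ v ∉ Set.range φ, degree E v = 0) :
    ∃ e : Fin E.card → Sym2 K, s ∈ maxValues (c ∘ φ) (d ∘ φ) e := by
  obtain ⟨e, l, hel⟩ := exists_eq_ofEnds_map φ hE
  have hobj : objective c d E = objective (c ∘ φ) (d ∘ φ) (ofEnds e l) ∘ (· ∘ φ) :=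
    funext fun x => (congrArg (objective c d · x) hel).trans (objective_ofEnds_map hφ hc hd e l x)
  refine ⟨e, l, ?_⟩
  rwa [HasMaxValue, hobj, hφ.surjective_comp_right.range_comp] at h

/-- The maximal values of `objective` over all multigraphs with at most `N` vertices and edges
and integer coefficients of absolute value at most `N`. -/
def boundedMaxValues (N : ℕ) : Set ℝ :=
  ⋃ (k ∈ Finset.range (N + 1)) (m ∈ Finset.range (N + 1))
    (c ∈ Finset.Icc (-N : Fin k → ℤ) N) (d ∈ Finset.Icc (-N : Fin k → ℤ) N)
    (e ∈ (Finset.univ : Finset (Fin m → Sym2 (Fin k)))),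
    maxValues (fun i => (c i : ℝ)) (fun i => (d i : ℝ)) e

theorem isPWO_boundedMaxValues (N : ℕ) : (boundedMaxValues N).IsPWO := by
  simp only [boundedMaxValues, Finset.isPWO_bUnion]
  exact fun _ _ _ _ _ _ _ _ _ _ => isPWO_maxValues _ _ _

theorem HasMaxValue.mem_boundedMaxValues [Fintype V] [DecidableEq V] {c d : V → ℤ} {s : ℝ}
    {E : LengthGraph V} {S : Finset V} {N : ℕ}
    (h : HasMaxValue (fun v => (c v : ℝ)) (fun v => (d v : ℝ)) E s)
    (hSN : S.card ≤ N) (hEN : E.card ≤ N) (hcN : ∀ v, |c v| ≤ N) (hdN : ∀ v, |d v| ≤ N)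
    (hc : ∀ v ∉ S, c v = 0) (hd : ∀ v ∉ S, d v = 0) (hE : ∀ v ∉ S, degree E v = 0) :
    s ∈ boundedMaxValues N := by
  let φ : Fin S.card → V := fun k => S.equivFin.symm k
  have hφ : φ.Injective := Subtype.val_injective.comp S.equivFin.symm.injective
  have hrange (v : V) (hv : v ∉ Set.range φ) : v ∉ S := fun hvS =>
    hv ⟨S.equivFin ⟨v, hvS⟩, by simp [φ]⟩
  obtain ⟨e, he⟩ := h.exists_mem_maxValues hφ
    (fun v hv => by simp [hc v (hrange v hv)]) (fun v hv => by simp [hd v (hrange v hv)])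
    (fun v hv => hE v (hrange v hv))
  simp only [boundedMaxValues, Set.mem_iUnion₂]
  exact ⟨S.card, Finset.mem_range_succ_iff.2 hSN, E.card, Finset.mem_range_succ_iff.2 hEN,
    c ∘ φ, Finset.mem_Icc.2 ⟨fun k => (abs_le.1 (hcN (φ k))).1, fun k => (abs_le.1 (hcN (φ k))).2⟩,
    d ∘ φ, Finset.mem_Icc.2 ⟨fun k => (abs_le.1 (hdN (φ k))).1, fun k => (abs_le.1 (hdN (φ k))).2⟩,
    e, Finset.mem_univ e, he⟩

end MaxValues

end LengthGraph

namespace ResolutionDatum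

open LengthGraph

variable {r : ℕ} (D : ResolutionDatum r)

/-- The degree `K · A_i` of the canonical divisor, as given by adjunction. -/
def canonicalDegree (i : Fin r) : ℤ := 2 * D.p i - 2 - D.M i i

theorem c_eq_canonicalDegree (i : Fin r) : D.c i = D.canonicalDegree i := by
  simp [c, canonicalDegree]

theorem posDef_neg : (-D.M.map (Int.cast : ℤ → ℝ)).PosDef := by
  have hsymm : (-D.M.map (Int.cast : ℤ → ℝ)).IsSymm := (D.symm.map _).neg
  refine .of_dotProduct_mulVec_pos (isHermitian_iff_isSymm.2 hsymm) fun x hx => ?_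
  simpa [neg_mulVec] using D.negdef x hx

theorem diag_neg (i : Fin r) : D.M i i < 0 := by
  simpa using D.posDef_neg.diag_pos (i := i)

theorem neg_diag_le_canonicalDegree_add_two (i : Fin r) : -D.M i i ≤ D.canonicalDegree i + 2 := by
  rw [canonicalDegree]
  omega

theorem canonicalDegree_nonneg (i : Fin r) : 0 ≤ D.canonicalDegree i := by
  have := D.diag_neg i
  have := D.diag_le_neg_two i
  rw [canonicalDegree]
  omega

theorem diag_eq_neg_two {i : Fin r} (h : D.canonicalDegree i = 0) : D.M i i = -2 := by
  have := D.diag_neg i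
  have := D.diag_le_neg_two i
  rw [canonicalDegree] at h
  omega

theorem neg_diag_le_three_mul {i : Fin r} (h : D.canonicalDegree i ≠ 0) :
    -D.M i i ≤ 3 * D.canonicalDegree i := by
  have := D.canonicalDegree_nonneg i
  have := D.neg_diag_le_canonicalDegree_add_two i
  omega

/-- The weighted dual graph as a multigraph with `M i j` edges of length one joining `i ≠ j`. -/
def dualGraph : LengthGraph (Fin r) :=
  ∑ i, ∑ j ∈ Finset.Ioi i, Multiset.replicate (D.M i j).toNat (s(i, j), 1)

theorem sum_map_dualGraph {R : Type*} [CommRing R] {h : Sym2 (Fin r) × ℕ+ → R}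
    {f : Fin r → Fin r → R} (hf : ∀ i j, D.M i j * h (s(i, j), 1) = f i j + f j i) :
    (D.dualGraph.map h).sum = ∑ i, ∑ j ∈ {i}ᶜ, f i j := by
  let sumMap : Multiset (Sym2 (Fin r) × ℕ+) →+ R :=
    Multiset.sumAddMonoidHom.comp (Multiset.mapAddMonoidHom h)
  calc sumMap D.dualGraph
      = ∑ i, ∑ j ∈ Finset.Ioi i, (D.M i j : R) * h (s(i, j), 1) := by
        simp only [dualGraph, map_sum]
        refine Finset.sum_congr rfl fun i _ => Finset.sum_congr rfl fun j hj => ?_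
        have hcast : ((D.M i j).toNat : R) = D.M i j := by
          exact_mod_cast congrArg (Int.cast : ℤ → R)
            (Int.toNat_of_nonneg (D.offdiag_nonneg i j (Finset.mem_Ioi.1 hj).ne))
        simp [sumMap, hcast]
    _ = ∑ i, ∑ j ∈ {i}ᶜ, f i j := by
        simp only [hf]
        exact Finset.sum_sum_Ioi_add_eq_sum_sum_off_diag fun j i => f i j

theorem degree_dualGraph (i : Fin r) : (degree D.dualGraph i : ℤ) = ∑ j ∈ {i}ᶜ, D.M i j := by
  have hf (j k : Fin r) : (D.M j k : ℤ) * (s(j, k).toMultiset.count i : ℤ) =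
      (if j = i then D.M j k else 0) + if k = i then D.M k j else 0 := by
    simp [count_toMultiset_mk, mul_add, D.symm.apply, eq_comm]
  rw [degree, Nat.cast_multiset_sum, Multiset.map_map]
  refine (D.sum_map_dualGraph hf).trans ?_
  rw [Finset.sum_eq_single i] <;> simp +contextual

theorem energy_dualGraph (x : Fin r → ℝ) :
    energy D.dualGraph x = ∑ i, ∑ j ∈ {i}ᶜ, D.M i j * (x i * (x i - x j)) :=
  D.sum_map_dualGraph fun i j => by
    simp only [sqDiff_mk, PNat.val_ofNat, D.symm.apply]
    ring

/-- The intersection number `-A_i · ∑ A_j`, that is, a negated row sum of `M`. -/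
def rowDefect (i : Fin r) : ℤ := -D.M i i - degree D.dualGraph i

theorem dotProduct_neg_mulVec (x : Fin r → ℝ) :
    x ⬝ᵥ -D.M.map (Int.cast : ℤ → ℝ) *ᵥ x =
      ∑ i, D.rowDefect i * x i ^ 2 + energy D.dualGraph x := by
  rw [energy_dualGraph, ← Finset.sum_add_distrib, dotProduct]
  refine Finset.sum_congr rfl fun i _ => ?_
  have hdegree : (degree D.dualGraph i : ℝ) = ∑ j ∈ {i}ᶜ, (D.M i j : ℝ) := by
    exact_mod_cast D.degree_dualGraph i
  have hrow : ∑ j ∈ {i}ᶜ, (D.M i j : ℝ) * (x i * (x i - x j)) =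
      x i ^ 2 * ∑ j ∈ {i}ᶜ, (D.M i j : ℝ) - x i * ∑ j ∈ {i}ᶜ, D.M i j * x j := by
    rw [Finset.mul_sum, Finset.mul_sum, ← Finset.sum_sub_distrib]
    exact Finset.sum_congr rfl fun j _ => by ring
  rw [hrow, ← hdegree, neg_mulVec, Pi.neg_apply, mulVec, dotProduct,
    Fintype.sum_eq_add_sum_compl i, rowDefect]
  push_cast [map_apply]
  ring

theorem negK2_eq_dotProduct_inv : (D.negK2 : ℝ) = (fun i => (D.canonicalDegree i : ℝ)) ⬝ᵥ
    (-D.M.map (Int.cast : ℤ → ℝ))⁻¹ *ᵥ fun i => (D.canonicalDegree i : ℝ) := by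
  have hinv : (-D.M.map (Int.cast : ℤ → ℝ))⁻¹ =
      -((D.M.map (Int.cast : ℤ → ℚ))⁻¹).map (Rat.castHom ℝ) := by
    have hdet := (isUnit_iff_isUnit_det _).1 D.posDef_neg.isUnit.neg
    rw [neg_neg] at hdet
    rw [map_nonsing_inv, map_map]
    refine inv_eq_right_inv ?_
    simpa [Function.comp_def] using mul_nonsing_inv _ hdet
  have hc : Rat.castHom ℝ ∘ D.c = fun i => (D.canonicalDegree i : ℝ) :=
    funext fun i => by simp [c_eq_canonicalDegree]
  have hmulVec (A : Matrix (Fin r) (Fin r) ℚ) (v : Fin r → ℚ) :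
      Rat.castHom ℝ ∘ (A *ᵥ v) = A.map (Rat.castHom ℝ) *ᵥ (Rat.castHom ℝ ∘ v) :=
    funext fun i => RingHom.map_mulVec _ A v i
  rw [hinv, neg_mulVec, dotProduct_neg, ← hc, ← hmulVec, ← RingHom.map_dotProduct, negK2,
    Rat.cast_neg]
  rfl

theorem hasMaxValue_negK2 : HasMaxValue (fun i => (D.canonicalDegree i : ℝ))
    (fun i => (D.rowDefect i : ℝ)) D.dualGraph D.negK2 := by
  have hobj (x : Fin r → ℝ) :
      objective (fun i => (D.canonicalDegree i : ℝ)) (fun i => (D.rowDefect i : ℝ)) D.dualGraph x =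
        2 * ((fun i => (D.canonicalDegree i : ℝ)) ⬝ᵥ x) -
          x ⬝ᵥ -D.M.map (Int.cast : ℤ → ℝ) *ᵥ x := by
    rw [objective, dotProduct_neg_mulVec, dotProduct, Finset.mul_sum, Finset.sum_sub_distrib]
    simp only [mul_assoc, sub_add_eq_sub_sub]
  rw [HasMaxValue, funext hobj, negK2_eq_dotProduct_inv]
  exact isGreatest_range_two_mul_dotProduct_sub D.posDef_neg _

theorem sum_canonicalDegree_le_three_mul_negK2 :
    ((∑ i, D.canonicalDegree i : ℤ) : ℝ) ≤ 3 * D.negK2 := by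
  let T : Finset (Fin r) := {i | D.canonicalDegree i ≠ 0}
  let x : Fin r → ℝ := fun i => if i ∈ T then 1 / 3 else 0
  have hmax := D.hasMaxValue_negK2.2 ⟨x, rfl⟩
  have henergy : energy D.dualGraph x ≤
      (1 / 3 - 0) ^ 2 * ∑ i ∈ T, (degree D.dualGraph i : ℝ) :=
    energy_ite_le_sq_mul_sum_degree _ T _ _
  have hlocal : ∑ i, (D.canonicalDegree i : ℝ) / 3 ≤
      ∑ i, (2 * (D.canonicalDegree i : ℝ) * x i - D.rowDefect i * x i ^ 2) -
        (1 / 3 - 0) ^ 2 * ∑ i ∈ T, (degree D.dualGraph i : ℝ) := by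
    rw [Finset.mul_sum, ← Finset.sum_ite_mem_eq T, ← Finset.sum_sub_distrib]
    refine Finset.sum_le_sum fun i _ => ?_
    by_cases hi : D.canonicalDegree i = 0
    · simp [x, T, hi]
    · have hdiag : (-D.M i i : ℝ) ≤ 3 * D.canonicalDegree i := by
        exact_mod_cast D.neg_diag_le_three_mul hi
      simp only [x, T, Finset.mem_filter_univ, ne_eq, hi, not_false_eq_true, if_true, rowDefect]
      push_cast
      linarith
  rw [objective] at hmax
  rw [← Finset.sum_div] at hlocal
  push_cast
  linarith

theorem mem_map_fst_dualGraph {i j : Fin r} (hij : i < j) (h : 0 < D.M i j) :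
    s(i, j) ∈ D.dualGraph.map Prod.fst :=
  Multiset.mem_map.2 ⟨(s(i, j), 1), Multiset.mem_sum.2 ⟨i, Finset.mem_univ i,
    Multiset.mem_sum.2 ⟨j, Finset.mem_Ioi.2 hij, Multiset.mem_replicate.2 ⟨by omega, rfl⟩⟩⟩, rfl⟩

theorem le_card_dualGraph_add_one : r ≤ D.dualGraph.card + 1 := by
  classical
  set G := SimpleGraph.fromRel fun i j : Fin r => 0 < D.M i j
  have hsub : G.edgeFinset.val ≤ D.dualGraph.map Prod.fst := by
    refine Multiset.le_iff_subset G.edgeFinset.nodup |>.2 fun e he => ?_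
    induction e with | _ i j =>
    rw [Finset.mem_val, SimpleGraph.mem_edgeFinset, SimpleGraph.mem_edgeSet,
      SimpleGraph.fromRel_adj, D.symm.apply, or_self] at he
    rcases he.1.lt_or_gt with hij | hij
    · exact D.mem_map_fst_dualGraph hij (D.symm.apply i j ▸ he.2)
    · exact Sym2.eq_swap ▸ D.mem_map_fst_dualGraph hij he.2
  have hcard := D.connected.card_vert_le_card_edgeSet_add_one
  have hle := Multiset.card_le_card hsub
  rw [Multiset.card_map] at hle
  rw [Nat.card_fin, Nat.card_eq_fintype_card, ← SimpleGraph.edgeFinset_card] at hcard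
  exact hcard.trans (Nat.add_le_add_right hle 1)

theorem neg_two_le_sum_degree_sub_two : -2 ≤ ∑ i, ((degree D.dualGraph i : ℤ) - 2) := by
  have hsum : ∑ i, (degree D.dualGraph i : ℤ) = 2 * D.dualGraph.card := by
    exact_mod_cast sum_degree D.dualGraph
  have := D.le_card_dualGraph_add_one
  rw [Finset.sum_sub_distrib, hsum, Finset.sum_const, Finset.card_fin, nsmul_eq_mul]
  omega

/-- Evaluate `-M` at the vector with entries `1` at the leaves and `2` elsewhere: the edges
contribute at most one for each leaf. -/
theorem sum_ite_degree_le_one_pos : 0 < ∑ i, if degree D.dualGraph i ≤ 1 then -D.M i i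
    else 4 * (-D.M i i - degree D.dualGraph i) := by
  let L : Finset (Fin r) := {i | degree D.dualGraph i ≤ 1}
  let x : Fin r → ℝ := fun i => if i ∈ L then 1 else 2
  have hx : x ≠ 0 := by
    obtain ⟨i⟩ := D.connected.nonempty
    refine fun h => absurd (congrFun h i) ?_
    simp only [x]
    split_ifs <;> norm_num
  have hpos := D.posDef_neg.dotProduct_mulVec_pos hx
  have henergy : energy D.dualGraph x ≤ (1 - 2) ^ 2 * ∑ i ∈ L, (degree D.dualGraph i : ℝ) :=
    energy_ite_le_sq_mul_sum_degree _ L _ _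
  rw [star_trivial, dotProduct_neg_mulVec] at hpos
  rw [Finset.mul_sum, ← Finset.sum_ite_mem_eq L] at henergy
  have hsum := hpos.trans_le (add_le_add_right henergy _)
  rw [← Finset.sum_add_distrib] at hsum
  rw [← Int.cast_pos (R := ℝ), Int.cast_sum]
  refine hsum.trans_eq (Finset.sum_congr rfl fun i _ => ?_)
  simp only [x, L, Finset.mem_filter_univ, rowDefect]
  split_ifs <;> push_cast <;> ring

/-- Connectedness bounds the leaves by the branching, and positivity of `-M` the branching. -/
theorem sum_abs_degree_sub_two_le :
    ∑ i, |(degree D.dualGraph i : ℤ) - 2| ≤ 4 * ∑ i, D.canonicalDegree i + 6 := by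
  have hlocal (i : Fin r) : |(degree D.dualGraph i : ℤ) - 2| +
      ((if degree D.dualGraph i ≤ 1 then -D.M i i
        else 4 * (-D.M i i - degree D.dualGraph i)) + 3 * ((degree D.dualGraph i : ℤ) - 2)) ≤
      4 * D.canonicalDegree i := by
    have := D.canonicalDegree_nonneg i
    have := D.neg_diag_le_canonicalDegree_add_two i
    rw [abs_eq_max_neg]
    split_ifs <;> omega
  have hsum := Finset.sum_le_sum fun i (_ : i ∈ Finset.univ) => hlocal i
  rw [Finset.sum_add_distrib, Finset.sum_add_distrib, ← Finset.mul_sum, ← Finset.mul_sum] at hsum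
  have := D.sum_ite_degree_le_one_pos
  have := D.neg_two_le_sum_degree_sub_two
  linarith

/-- The vertices other than those with `K · A_i = 0` and valency two, which are suppressed without
changing `-K²`. -/
def essentialVertices : Finset (Fin r) :=
  {i | ¬(D.canonicalDegree i = 0 ∧ degree D.dualGraph i = 2)}

variable {D} {B : ℕ}

theorem canonicalDegree_le (hB : ∑ i, D.canonicalDegree i ≤ B) (i : Fin r) :
    D.canonicalDegree i ≤ B :=
  (Finset.single_le_sum (fun j _ => D.canonicalDegree_nonneg j) (Finset.mem_univ i)).trans hB

theorem abs_rowDefect_le (hB : ∑ i, D.canonicalDegree i ≤ B) (i : Fin r) :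
    |D.rowDefect i| ≤ 4 * B + 8 := by
  have hdegree : |(degree D.dualGraph i : ℤ) - 2| ≤ 4 * B + 6 := by
    have := Finset.single_le_sum (fun j _ => abs_nonneg ((degree D.dualGraph j : ℤ) - 2))
      (Finset.mem_univ i)
    have := D.sum_abs_degree_sub_two_le
    linarith
  have := canonicalDegree_le hB i
  have := D.neg_diag_le_canonicalDegree_add_two i
  have := D.diag_neg i
  rw [abs_le] at hdegree
  rw [rowDefect, abs_le]
  omega

theorem notMem_essentialVertices {i : Fin r} :
    i ∉ D.essentialVertices ↔ D.canonicalDegree i = 0 ∧ degree D.dualGraph i = 2 := by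
  rw [essentialVertices, Finset.mem_filter_univ, not_not]

theorem rowDefect_eq_zero {i : Fin r} (hi : i ∉ D.essentialVertices) : D.rowDefect i = 0 := by
  obtain ⟨hdeg, hval⟩ := notMem_essentialVertices.1 hi
  rw [rowDefect, D.diag_eq_neg_two hdeg, hval]
  rfl

theorem one_le_canonicalDegree_add_abs {i : Fin r} (hi : i ∈ D.essentialVertices) :
    1 ≤ D.canonicalDegree i + |(degree D.dualGraph i : ℤ) - 2| := by
  rw [← not_not (a := i ∈ _), notMem_essentialVertices] at hi
  have := D.canonicalDegree_nonneg i
  rw [abs_eq_max_neg]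
  omega

theorem sum_canonicalDegree_add_abs_le (hB : ∑ i, D.canonicalDegree i ≤ B) :
    ∑ i ∈ D.essentialVertices, (D.canonicalDegree i + |(degree D.dualGraph i : ℤ) - 2|) ≤
      5 * B + 6 := by
  have hsub := Finset.sum_le_univ_sum_of_nonneg (s := D.essentialVertices) fun i =>
    add_nonneg (D.canonicalDegree_nonneg i) (abs_nonneg ((degree D.dualGraph i : ℤ) - 2))
  have := D.sum_abs_degree_sub_two_le
  rw [Finset.sum_add_distrib (s := Finset.univ)] at hsub
  linarith

theorem card_essentialVertices_le (hB : ∑ i, D.canonicalDegree i ≤ B) :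
    D.essentialVertices.card ≤ 5 * B + 6 := by
  have hcard := Finset.card_nsmul_le_sum D.essentialVertices _ 1 fun i hi =>
    one_le_canonicalDegree_add_abs hi
  have := sum_canonicalDegree_add_abs_le hB
  rw [nsmul_one] at hcard
  omega

theorem sum_degree_essentialVertices_le (hB : ∑ i, D.canonicalDegree i ≤ B) :
    ∑ i ∈ D.essentialVertices, (degree D.dualGraph i : ℤ) ≤ 15 * B + 18 := by
  have hlocal (i : Fin r) (hi : i ∈ D.essentialVertices) : (degree D.dualGraph i : ℤ) ≤
      3 * (D.canonicalDegree i + |(degree D.dualGraph i : ℤ) - 2|) := by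
    have := one_le_canonicalDegree_add_abs hi
    have := D.canonicalDegree_nonneg i
    have := le_abs_self ((degree D.dualGraph i : ℤ) - 2)
    omega
  have hsum := Finset.sum_le_sum hlocal
  rw [← Finset.mul_sum] at hsum
  have := sum_canonicalDegree_add_abs_le hB
  linarith

theorem negK2_mem_boundedMaxValues (hB : ∑ i, D.canonicalDegree i ≤ B) :
    (D.negK2 : ℝ) ∈ boundedMaxValues (8 * B + 9) := by
  obtain ⟨E, hE, hdegree⟩ := D.hasMaxValue_negK2.exists_suppress_all fun i hi hval => by
    rw [Int.cast_eq_zero] at hi ⊢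
    exact rowDefect_eq_zero (notMem_essentialVertices.2 ⟨hi, hval⟩)
  have hdegree_ite (i : Fin r) :
      degree E i = if i ∈ D.essentialVertices then degree D.dualGraph i else 0 := by
    simp only [hdegree, Int.cast_eq_zero, ← notMem_essentialVertices, ite_not]
  have hcardE : 2 * (E.card : ℤ) ≤ 15 * B + 18 := by
    refine le_trans (le_of_eq ?_) (sum_degree_essentialVertices_le hB)
    have hsum := sum_degree E
    simp only [hdegree_ite, Finset.sum_ite_mem_eq] at hsum
    exact_mod_cast hsum.symm
  refine hE.mem_boundedMaxValues (S := D.essentialVertices)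
    ((card_essentialVertices_le hB).trans (by omega)) (by omega) (fun i => ?_) (fun i => ?_)
    (fun i hi => (notMem_essentialVertices.1 hi).1) (fun i hi => rowDefect_eq_zero hi)
    (fun i hi => (hdegree_ite i).trans (if_neg hi))
  · rw [abs_of_nonneg (D.canonicalDegree_nonneg i)]
    exact (canonicalDegree_le hB i).trans (by push_cast; omega)
  · exact (abs_rowDefect_le hB i).trans (by push_cast; omega)

end ResolutionDatum

theorem isWF_negK2Set : negK2Set.IsWF := by
  refine isWF_of_forall_inter_Iic_isWF fun a _ => ?_
  obtain ⟨B, hB⟩ := exists_nat_ge (3 * a)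
  refine (LengthGraph.isPWO_boundedMaxValues (8 * B + 9)).isWF.mono ?_
  rintro _ ⟨⟨r, -, D, rfl⟩, ha⟩
  refine ResolutionDatum.negK2_mem_boundedMaxValues ?_
  have hsum : ((∑ i, D.canonicalDegree i : ℤ) : ℝ) ≤ (B : ℤ) := by
    have := D.sum_canonicalDegree_le_three_mul_negK2
    rw [Set.mem_Iic] at ha
    push_cast at this ⊢
    linarith
  exact_mod_cast hsum

/-- **Theorem 1.12 (D.C.C.).** The set of values `-K²` of normal surface singularities has no
accumulation points from above; equivalently, it contains no strictly decreasing sequence. -/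
theorem negK2Set_no_accumulation_from_above :
    (∀ α : ℝ, ∃ ε : ℝ, 0 < ε ∧ ∀ s ∈ negK2Set, ¬(α < s ∧ s < α + ε)) ∧
    ¬ ∃ f : ℕ → ℝ, (∀ n : ℕ, f n ∈ negK2Set) ∧ StrictAnti f := by
  refine ⟨fun α => ?_, fun ⟨f, hmem, hf⟩ =>
    Set.isWF_iff_no_descending_seq.1 isWF_negK2Set f hf hmem⟩
  obtain ⟨β, hαβ, hβ⟩ := exists_gt_forall_notMem_Ioo isWF_negK2Set α
  exact ⟨β - α, sub_pos.2 hαβ, fun s hs h => hβ s hs ⟨h.1, by linarith [h.2]⟩⟩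
end
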